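/- (Proposition: degree decomposition of the Chern–Simons form) Fix an integer k ≥ 1 and for 0 ≤ l ≤ k−1 let a_l ∈ Ω be the coefficient of t^l in the expansion Tr(θ(Θ + tθ²)^{k−1}) = Σ_{l=0}^{k−1} a_l t^l, and define ω_{k+l,k−l−1} = (k!·l!/(k+l)!) a_l. Then the descent equations hold: ∂̄ω_{k,k−1} = Tr(Θ^k), ∂ω_{k+l,k−l−1} = ∂̄ω_{k+l+1,k−l−2} for 0 ≤ l ≤ k−2, and ∂ω_{2k−1,0} = 0; moreover ω_{2k−1,0} = (k!(k−1)!/(2k−1)!) Tr(θ^{2k−1}); consequently Tr(Θ^k) = (∂ + ∂̄)(Σ_{l=0}^{k−1} (−1)^l ω_{k+l,k−l−1}). -/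

import Mathlib

/-- An abstract model of the Dolbeault double complex of `(p,q)`-forms on a complex
manifold: a bigraded associative `ℂ`-algebra `Ω = ⨁ Ω^{p,q}`, graded-commutative with
respect to total degree, with `ℂ`-linear operators `∂` (`pd`) and `∂̄` (`pdb`) of
bidegrees `(1,0)` and `(0,1)`, squaring to zero and anticommuting, satisfying the
graded Leibniz rule. -/
structure DolbeaultAlgebra (Ω : Type*) [Ring Ω] [Algebra ℂ Ω] where
  /-- the `ℂ`-subspace of elements of bidegree `(p,q)` -/
  deg : ℕ → ℕ → Submodule ℂ Ω
  one_mem : (1 : Ω) ∈ deg 0 0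
  mul_mem : ∀ {p q p' q'} {a b : Ω}, a ∈ deg p q → b ∈ deg p' q' →
    a * b ∈ deg (p + p') (q + q')
  gcomm : ∀ {p q p' q'} (a b : Ω), a ∈ deg p q → b ∈ deg p' q' →
    a * b = ((-1 : ℂ) ^ ((p + q) * (p' + q'))) • (b * a)
  /-- the operator `∂` -/
  pd : Ω →ₗ[ℂ] Ω
  /-- the operator `∂̄` -/
  pdb : Ω →ₗ[ℂ] Ω
  pd_mem : ∀ {p q} {a : Ω}, a ∈ deg p q → pd a ∈ deg (p + 1) q
  pdb_mem : ∀ {p q} {a : Ω}, a ∈ deg p q → pdb a ∈ deg p (q + 1)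
  pd_pd : ∀ a : Ω, pd (pd a) = 0
  pdb_pdb : ∀ a : Ω, pdb (pdb a) = 0
  pd_pdb : ∀ a : Ω, pd (pdb a) + pdb (pd a) = 0
  pd_leibniz : ∀ {p q} (a b : Ω), a ∈ deg p q →
    pd (a * b) = pd a * b + ((-1 : ℂ) ^ (p + q)) • (a * pd b)
  pdb_leibniz : ∀ {p q} (a b : Ω), a ∈ deg p q →
    pdb (a * b) = pdb a * b + ((-1 : ℂ) ^ (p + q)) • (a * pdb b)

namespace DolbeaultAlgebra

variable {Ω : Type*} [Ring Ω] [Algebra ℂ Ω] {r : ℕ}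

/-- the entrywise extension of `∂` to `r × r` matrices over `Ω` -/
def mpd (A : DolbeaultAlgebra Ω) (M : Matrix (Fin r) (Fin r) Ω) :
    Matrix (Fin r) (Fin r) Ω := M.map A.pd

/-- the entrywise extension of `∂̄` to `r × r` matrices over `Ω` -/
def mpdb (A : DolbeaultAlgebra Ω) (M : Matrix (Fin r) (Fin r) Ω) :
    Matrix (Fin r) (Fin r) Ω := M.map A.pdb

/-- the assertion that all entries of a matrix lie in `Ω^{p,q}` -/
def MatDeg (A : DolbeaultAlgebra Ω) (p q : ℕ) (M : Matrix (Fin r) (Fin r) Ω) : Prop :=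
  ∀ i j, M i j ∈ A.deg p q

end DolbeaultAlgebra

variable {Ω : Type*} [Ring Ω] [Algebra ℂ Ω]

/-!
Let `F_t = Θ + t θ²`. Both operators act on `F_t` through the commutator with `θ`, namely
`∂F_t = [F_t, θ]` and `∂̄F_t = t [F_t, θ]`. By graded cyclicity of the trace,
`a(t) = Tr (θ F_t ^ (k - 1))` and `g(t) = Tr (F_t ^ k)` therefore satisfy `k ∂a = g'` and
`k ∂̄a = k g + t g'`. Comparing coefficients of `t ^ l`, the forms `∂̄ω_{k+l,k-l-1}` and
`∂ω_{k+l,k-l-1}` are the consecutive terms `u_l` and `u_{l+1}` of the single sequence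
`u_l = ((k-1)! l! / (k+l-1)!) g_l`. It starts at `u_0 = Tr (Θ ^ k)` and ends at `u_k = 0`, because
`Tr (θ ^ (2 k)) = 0` by graded cyclicity, so the alternating sum telescopes.
-/

section Pencil

open Polynomial

variable {K R V : Type*}

theorem eq_of_forall_sum_pow_smul_eq [Field K] [Infinite K] [AddCommGroup V] [Module K V]
    {n : ℕ} {u v : ℕ → V}
    (h : ∀ t : K, ∑ l ∈ Finset.range n, t ^ l • u l = ∑ l ∈ Finset.range n, t ^ l • v l)
    {l : ℕ} (hl : l < n) : u l = v l := by
  rw [← sub_eq_zero, ← Module.forall_dual_apply_eq_zero_iff K]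
  intro φ
  have hp : ∑ i ∈ Finset.range n, C (φ (u i - v i)) * X ^ i = 0 := by
    refine Polynomial.funext fun t => ?_
    have ht := congrArg φ (sub_eq_zero.2 (h t))
    simpa only [← Finset.sum_sub_distrib, ← smul_sub, map_sum, map_smul, smul_eq_mul, map_zero,
      eval_finsetSum, eval_mul, eval_C, eval_pow, eval_X, eval_zero, mul_comm] using ht
  simpa only [finsetSum_coeff, coeff_C_mul_X_pow, Finset.sum_ite_eq, Finset.mem_range, hl,
    if_true, coeff_zero] using congrArg (coeff · l) hp

/-- The linear pencil `x + y X` as a polynomial over a possibly noncommutative ring. It keeps track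
of the coefficients of the powers of `x + t y`, where `t` is a central parameter. -/
noncomputable def pencil [Semiring R] (x y : R) : R[X] := C x + C y * X

theorem map_pencil {S : Type*} [Semiring R] [Semiring S] (f : R →+* S) (x y : R) :
    (pencil x y).map f = pencil (f x) (f y) := by
  simp [pencil]

theorem natDegree_pencil_le [Semiring R] (x y : R) : (pencil x y).natDegree ≤ 1 := by
  unfold pencil
  compute_degree

theorem coeff_zero_pencil_pow [Semiring R] (x y : R) (m : ℕ) :
    (pencil x y ^ m).coeff 0 = x ^ m := by
  rw [← constantCoeff_apply, map_pow]
  simp [pencil]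

theorem coeff_self_pencil_pow [Semiring R] (x y : R) (m : ℕ) :
    (pencil x y ^ m).coeff m = y ^ m := by
  simpa [pencil, coeff_C] using coeff_pow_of_natDegree_le (m := m) (natDegree_pencil_le x y)

theorem add_smul_pow_eq_sum_coeff_pencil [CommSemiring K] [Semiring R] [Algebra K R]
    (x y : R) (t : K) (m : ℕ) :
    (x + t • y) ^ m = ∑ l ∈ Finset.range (m + 1), t ^ l • (pencil x y ^ m).coeff l := by
  have hcomm (z : R) : Commute (RingHom.id R z) (algebraMap K R t) :=
    (Algebra.commutes t z).symm
  have heval : eval₂RingHom' (RingHom.id R) _ hcomm (pencil x y) = x + t • y := by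
    simp [pencil, eval₂RingHom', Algebra.smul_def, Algebra.commutes]
  have hdeg : (pencil x y ^ m).natDegree < m + 1 :=
    Nat.lt_succ_of_le <| by simpa using natDegree_pow_le_of_le m (natDegree_pencil_le x y)
  rw [← heval, ← map_pow]
  refine (eval₂_eq_sum_range' _ hdeg _).trans (Finset.sum_congr rfl fun l _ => ?_)
  rw [RingHom.id_apply, ← map_pow, ← Algebra.commutes, Algebra.smul_def]

theorem derivative_pow_eq_sum [Semiring R] (p : R[X]) (m : ℕ) :
    derivative (p ^ (m + 1)) =
      ∑ i ∈ Finset.range (m + 1), p ^ i * (derivative p * p ^ (m - i)) := by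
  induction m with
  | zero => simp
  | succ m ih =>
    rw [pow_succ', derivative_mul, ih, Finset.mul_sum, Finset.sum_range_succ' _ (m + 1), add_comm]
    simp [pow_succ', mul_assoc]

theorem coeff_mul_comm_of_tracial [Semiring R] [AddCommMonoid V] (τ : R →+ V)
    (hτ : ∀ x y, τ (x * y) = τ (y * x)) (p q : R[X]) (l : ℕ) :
    τ ((p * q).coeff l) = τ ((q * p).coeff l) := by
  simp only [coeff_mul, map_sum]
  rw [← Finset.Nat.sum_antidiagonal_swap]
  exact Finset.sum_congr rfl fun _ _ => hτ _ _

theorem coeff_derivative_pow_of_tracial [Semiring R] [AddCommMonoid V] (τ : R →+ V)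
    (hτ : ∀ x y, τ (x * y) = τ (y * x)) (p : R[X]) (m l : ℕ) :
    τ ((derivative (p ^ (m + 1))).coeff l) =
      (m + 1) • τ ((derivative p * p ^ m).coeff l) := by
  rw [derivative_pow_eq_sum, finsetSum_coeff, map_sum]
  conv_rhs => rw [← Finset.card_range (m + 1), ← Finset.sum_const]
  refine Finset.sum_congr rfl fun i hi => ?_
  rw [coeff_mul_comm_of_tracial τ hτ, mul_assoc, ← pow_add,
    Nat.sub_add_cancel (Finset.mem_range_succ_iff.1 hi)]

theorem coeff_succ_pencil_pow_of_tracialOn [Ring R] [AddCommMonoid V] (S : Subring R)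
    (τ : R →+ V) (hτ : ∀ x ∈ S, ∀ y ∈ S, τ (x * y) = τ (y * x)) {x y : R} (hx : x ∈ S)
    (hy : y ∈ S) (m l : ℕ) :
    (l + 1) • τ ((pencil x y ^ (m + 1)).coeff (l + 1)) =
      (m + 1) • τ (y * (pencil x y ^ m).coeff l) := by
  set p : S[X] := pencil ⟨x, hx⟩ ⟨y, hy⟩ with hp
  have hcoeff (m l : ℕ) : (pencil x y ^ m).coeff l = S.subtype ((p ^ m).coeff l) := by
    rw [← coeff_map, Polynomial.map_pow, hp, map_pencil]
    rfl
  have hp' : derivative p = C ⟨y, hy⟩ := by simp [hp, pencil]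
  have key := coeff_derivative_pow_of_tracial (τ.comp S.subtype.toAddMonoidHom)
    (fun u v => hτ u u.2 v v.2) p m l
  rw [coeff_derivative, ← Nat.cast_add_one, ← nsmul_eq_mul', map_nsmul, hp', coeff_C_mul] at key
  simpa [hcoeff] using key

end Pencil

theorem trace_mul_of_entrywise {m n K R : Type*} [Fintype m] [Fintype n]
    [NonUnitalNonAssocSemiring R] [DistribSMul K R] (c : K) {M : Matrix m n R} {N : Matrix n m R}
    (h : ∀ i j, M i j * N j i = c • (N j i * M i j)) :
    (M * N).trace = c • (N * M).trace := by
  simp only [Matrix.trace, Matrix.diag_apply, Matrix.mul_apply, h, Finset.smul_sum]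
  exact Finset.sum_comm

namespace DolbeaultAlgebra

variable {n : Type*} [Fintype n]

/-- The subalgebra generated by the homogeneous elements of even total degree. It is commutative
by graded commutativity, and it contains the entries of curvature matrices. -/
def even (A : DolbeaultAlgebra Ω) : Subalgebra ℂ Ω :=
  Algebra.adjoin ℂ {x | ∃ p q, Even (p + q) ∧ x ∈ A.deg p q}

theorem mem_even (A : DolbeaultAlgebra Ω) {p q : ℕ} (hpq : Even (p + q)) {x : Ω}
    (hx : x ∈ A.deg p q) : x ∈ A.even :=
  Algebra.subset_adjoin ⟨p, q, hpq, hx⟩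

theorem commute_of_mem_deg_of_mem_even (A : DolbeaultAlgebra Ω) {p q : ℕ} {x y : Ω}
    (hx : x ∈ A.deg p q) (hy : y ∈ A.even) : Commute x y := by
  refine Algebra.commute_of_mem_adjoin_of_forall_mem_commute hy ?_
  rintro z ⟨p', q', hpq, hz⟩
  rw [Commute, SemiconjBy, A.gcomm x z hx hz, (hpq.mul_left _).neg_one_pow, one_smul]

theorem commute_of_mem_even (A : DolbeaultAlgebra Ω) {x y : Ω} (hx : x ∈ A.even)
    (hy : y ∈ A.even) : Commute x y := by
  refine (Algebra.commute_of_mem_adjoin_of_forall_mem_commute hx ?_).symm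
  rintro z ⟨p, q, -, hz⟩
  exact (A.commute_of_mem_deg_of_mem_even hz hy).symm

theorem trace_mul_comm_of_mem_even_matrix [DecidableEq n] (A : DolbeaultAlgebra Ω)
    {M N : Matrix n n Ω} (hM : M ∈ A.even.matrix) (hN : N ∈ A.even.matrix) :
    (M * N).trace = (N * M).trace := by
  have h := trace_mul_of_entrywise (1 : ℂ) (M := M) (N := N) fun i j => by
    rw [one_smul, (A.commute_of_mem_even (hM i j) (hN j i)).eq]
  rwa [one_smul] at h

theorem trace_mul_mul_of_deg [DecidableEq n] (A : DolbeaultAlgebra Ω) {p q p' q' : ℕ}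
    {M W N : Matrix n n Ω} (hM : ∀ i j, M i j ∈ A.deg p q) (hW : W ∈ A.even.matrix)
    (hN : ∀ i j, N i j ∈ A.deg p' q') :
    (M * W * N).trace = (-1 : ℂ) ^ ((p + q) * (p' + q')) • (N * (M * W)).trace := by
  refine trace_mul_of_entrywise _ fun i j => ?_
  rw [Matrix.mul_apply, Finset.sum_mul, Finset.mul_sum, Finset.smul_sum]
  refine Finset.sum_congr rfl fun k _ => ?_
  rw [mul_assoc, ← (A.commute_of_mem_deg_of_mem_even (hN j i) (hW k j)).eq, ← mul_assoc,
    A.gcomm _ _ (hM i k) (hN j i), smul_mul_assoc, mul_assoc]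

/-- A linear operator is an antiderivation if it satisfies the Leibniz rule with the sign given by
total degree. Both `∂` and `∂̄` are antiderivations, which lets them be treated uniformly. -/
def IsAntiderivation (A : DolbeaultAlgebra Ω) (D : Ω →ₗ[ℂ] Ω) : Prop :=
  ∀ ⦃p q : ℕ⦄ ⦃a : Ω⦄, a ∈ A.deg p q → ∀ b,
    D (a * b) = D a * b + (-1 : ℂ) ^ (p + q) • (a * D b)

theorem isAntiderivation_pd (A : DolbeaultAlgebra Ω) : A.IsAntiderivation A.pd :=
  fun _ _ a ha b => A.pd_leibniz a b ha

theorem isAntiderivation_pdb (A : DolbeaultAlgebra Ω) : A.IsAntiderivation A.pdb :=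
  fun _ _ a ha b => A.pdb_leibniz a b ha

namespace IsAntiderivation

variable {A : DolbeaultAlgebra Ω} {D : Ω →ₗ[ℂ] Ω}

theorem map_one (hD : A.IsAntiderivation D) : D 1 = 0 := by
  simpa using hD A.one_mem 1

theorem map_mul_of_mem_even (hD : A.IsAntiderivation D) {a : Ω} (ha : a ∈ A.even) (b : Ω) :
    D (a * b) = D a * b + a * D b := by
  induction ha using Algebra.adjoin_induction generalizing b with
  | mem x hx =>
    obtain ⟨p, q, hpq, hx⟩ := hx
    rw [hD hx, hpq.neg_one_pow, one_smul]
  | algebraMap c => simp [Algebra.algebraMap_eq_smul_one, hD.map_one]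
  | add x y _ _ hx hy => simp only [add_mul, map_add, hx, hy]; abel
  | mul x y _ _ hx hy => rw [mul_assoc, hx, hy, hx]; noncomm_ring

theorem matrix_map_mul_of_deg (hD : A.IsAntiderivation D) {p q : ℕ} {M : Matrix n n Ω}
    (hM : ∀ i j, M i j ∈ A.deg p q) (N : Matrix n n Ω) :
    (M * N).map D = M.map D * N + (-1 : ℂ) ^ (p + q) • (M * N.map D) := by
  ext i j
  simp only [Matrix.map_apply, Matrix.add_apply, Matrix.smul_apply, Matrix.mul_apply, map_sum,
    hD (hM i _), Finset.sum_add_distrib, Finset.smul_sum]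

variable [DecidableEq n]

theorem matrix_map_mul_of_mem_even (hD : A.IsAntiderivation D) {M : Matrix n n Ω}
    (hM : M ∈ A.even.matrix) (N : Matrix n n Ω) :
    (M * N).map D = M.map D * N + M * N.map D := by
  ext i j
  simp only [Matrix.map_apply, Matrix.add_apply, Matrix.mul_apply, map_sum,
    hD.map_mul_of_mem_even (hM i _), Finset.sum_add_distrib]

theorem matrix_map_pow_of_eq_lie (hD : A.IsAntiderivation D) {M N : Matrix n n Ω}
    (hM : M ∈ A.even.matrix) (hDM : M.map D = ⁅M, N⁆) (m : ℕ) :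
    (M ^ m).map D = ⁅M ^ m, N⁆ := by
  induction m with
  | zero =>
    ext i j
    rcases eq_or_ne i j with rfl | hij
    · simp [Ring.lie_def, hD.map_one]
    · simp [Ring.lie_def, hij]
  | succ m ih =>
    rw [pow_succ', hD.matrix_map_mul_of_mem_even hM, hDM, ih]
    simp only [Ring.lie_def]
    noncomm_ring

end IsAntiderivation

section ChernSimons

variable {r : ℕ} {A : DolbeaultAlgebra Ω} {θ : Matrix (Fin r) (Fin r) Ω}

theorem mpdb_mem_even (hθ : A.MatDeg 1 0 θ) : A.mpdb θ ∈ A.even.matrix :=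
  fun i j => A.mem_even (by decide) (A.pdb_mem (hθ i j))

theorem mul_self_mem_even (hθ : A.MatDeg 1 0 θ) : θ * θ ∈ A.even.matrix :=
  fun i j => by
    rw [Matrix.mul_apply]
    exact sum_mem fun l _ => A.mem_even (by decide) (A.mul_mem (hθ i l) (hθ l j))

theorem trace_mul_mul_self (hθ : A.MatDeg 1 0 θ) {W : Matrix (Fin r) (Fin r) Ω}
    (hW : W ∈ A.even.matrix) : (θ * W * θ).trace = -(θ * θ * W).trace := by
  simpa [mul_assoc] using A.trace_mul_mul_of_deg hθ hW hθ

theorem trace_mul_self_pow_succ (hθ : A.MatDeg 1 0 θ) (m : ℕ) :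
    ((θ * θ) ^ (m + 1)).trace = 0 := by
  have hcyc := trace_mul_mul_self hθ (pow_mem (mul_self_mem_even hθ) m)
  have hmid : θ * (θ * θ) ^ m * θ = (θ * θ) ^ (m + 1) := by
    simp only [← pow_two, ← pow_mul, ← pow_succ, ← pow_succ']
    congr 1
  rw [hmid, ← pow_succ'] at hcyc
  have := IsAddTorsionFree.of_isTorsionFree ℂ Ω
  exact self_eq_neg.1 hcyc

/-- The matrix `F_t = Θ + t θ²`, where `Θ = ∂̄θ` is the curvature, whose powers appear in the
Chern–Simons form. -/
def curvaturePath (A : DolbeaultAlgebra Ω) (θ : Matrix (Fin r) (Fin r) Ω) (t : ℂ) :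
    Matrix (Fin r) (Fin r) Ω :=
  A.mpdb θ + t • (θ * θ)

theorem curvaturePath_mem_even (hθ : A.MatDeg 1 0 θ) (t : ℂ) :
    A.curvaturePath θ t ∈ A.even.matrix :=
  add_mem (mpdb_mem_even hθ) (Subalgebra.smul_mem _ (mul_self_mem_even hθ) t)

theorem mpd_mul_self (hθ : A.MatDeg 1 0 θ) (hθpd : A.mpd θ = -(θ * θ)) :
    A.mpd (θ * θ) = 0 := by
  have hmul : A.mpd (θ * θ) = A.mpd θ * θ + (-1 : ℂ) ^ (1 + 0) • (θ * A.mpd θ) :=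
    A.isAntiderivation_pd.matrix_map_mul_of_deg hθ θ
  rw [hmul, hθpd, add_zero, pow_one, neg_one_smul]
  noncomm_ring

theorem mpdb_mul_self (hθ : A.MatDeg 1 0 θ) : A.mpdb (θ * θ) = ⁅A.mpdb θ, θ⁆ := by
  have hmul : A.mpdb (θ * θ) = A.mpdb θ * θ + (-1 : ℂ) ^ (1 + 0) • (θ * A.mpdb θ) :=
    A.isAntiderivation_pdb.matrix_map_mul_of_deg hθ θ
  rw [hmul, Ring.lie_def, add_zero, pow_one, neg_one_smul, sub_eq_add_neg]

theorem mpd_mpdb (A : DolbeaultAlgebra Ω) (M : Matrix (Fin r) (Fin r) Ω) :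
    A.mpd (A.mpdb M) = -A.mpdb (A.mpd M) := by
  ext i j
  exact eq_neg_of_add_eq_zero_left (A.pd_pdb (M i j))

theorem mpdb_mpdb (A : DolbeaultAlgebra Ω) (M : Matrix (Fin r) (Fin r) Ω) :
    A.mpdb (A.mpdb M) = 0 := by
  ext i j
  exact A.pdb_pdb (M i j)

theorem mpd_curvaturePath (hθ : A.MatDeg 1 0 θ) (hθpd : A.mpd θ = -(θ * θ)) (t : ℂ) :
    A.mpd (A.curvaturePath θ t) = ⁅A.curvaturePath θ t, θ⁆ := by
  have hΘ : A.mpd (A.mpdb θ) = ⁅A.mpdb θ, θ⁆ := by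
    rw [mpd_mpdb, hθpd, ← mpdb_mul_self hθ]
    ext i j
    simp [mpdb]
  have hadd : A.mpd (A.curvaturePath θ t) = A.mpd (A.mpdb θ) + t • A.mpd (θ * θ) := by
    ext i j
    simp [mpd, curvaturePath]
  rw [hadd, hΘ, mpd_mul_self hθ hθpd]
  simp [curvaturePath, Ring.lie_def, add_mul, mul_add, mul_assoc]

theorem mpdb_curvaturePath (hθ : A.MatDeg 1 0 θ) (t : ℂ) :
    A.mpdb (A.curvaturePath θ t) = ⁅A.curvaturePath θ t, t • θ⁆ := by
  have hadd : A.mpdb (A.curvaturePath θ t) = A.mpdb (A.mpdb θ) + t • A.mpdb (θ * θ) := by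
    ext i j
    simp [mpdb, curvaturePath]
  rw [hadd, mpdb_mpdb, mpdb_mul_self hθ]
  simp [curvaturePath, Ring.lie_def, add_mul, mul_add, mul_assoc, smul_sub]

theorem IsAntiderivation.map_trace_mul_pow {D : Ω →ₗ[ℂ] Ω} (hD : A.IsAntiderivation D)
    (hθ : A.MatDeg 1 0 θ) {F : Matrix (Fin r) (Fin r) Ω} (hF : F ∈ A.even.matrix) {c : ℂ}
    (hDF : F.map D = ⁅F, c • θ⁆) (m : ℕ) :
    D (θ * F ^ m).trace = (θ.map D * F ^ m).trace + (2 * c) • (θ * θ * F ^ m).trace := by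
  have hcyc := trace_mul_mul_self hθ (pow_mem hF m)
  rw [AddMonoidHom.map_trace, hD.matrix_map_mul_of_deg hθ, hD.matrix_map_pow_of_eq_lie hF hDF,
    Matrix.trace_add, Ring.lie_def, mul_sub, mul_smul_comm, mul_smul_comm, smul_mul_assoc,
    mul_smul_comm, ← mul_assoc, ← mul_assoc, Matrix.trace_smul, Matrix.trace_sub,
    Matrix.trace_smul, Matrix.trace_smul, hcyc]
  module

theorem pd_trace_mul_curvaturePath_pow (hθ : A.MatDeg 1 0 θ) (hθpd : A.mpd θ = -(θ * θ)) (t : ℂ)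
    (m : ℕ) :
    A.pd (θ * A.curvaturePath θ t ^ m).trace = (θ * θ * A.curvaturePath θ t ^ m).trace := by
  have hF : (A.curvaturePath θ t).map A.pd = ⁅A.curvaturePath θ t, (1 : ℂ) • θ⁆ := by
    rw [one_smul]
    exact mpd_curvaturePath hθ hθpd t
  rw [A.isAntiderivation_pd.map_trace_mul_pow hθ (curvaturePath_mem_even hθ t) hF, ← mpd, hθpd,
    neg_mul, Matrix.trace_neg]
  module

theorem pdb_trace_mul_curvaturePath_pow (hθ : A.MatDeg 1 0 θ) (t : ℂ) (m : ℕ) :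
    A.pdb (θ * A.curvaturePath θ t ^ m).trace =
      (A.curvaturePath θ t ^ (m + 1)).trace + t • (θ * θ * A.curvaturePath θ t ^ m).trace := by
  have hpow : (A.curvaturePath θ t ^ (m + 1)).trace =
      (A.mpdb θ * A.curvaturePath θ t ^ m).trace +
        t • (θ * θ * A.curvaturePath θ t ^ m).trace := by
    rw [pow_succ']
    nth_rw 1 [curvaturePath]
    rw [add_mul, smul_mul_assoc, Matrix.trace_add, Matrix.trace_smul]
  rw [A.isAntiderivation_pdb.map_trace_mul_pow hθ (curvaturePath_mem_even hθ t)
    (mpdb_curvaturePath hθ t), ← mpdb, hpow]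
  module

/-- The coefficient of `t ^ l` in `Tr (F_t ^ k)`. The derivatives of the Chern–Simons coefficients
are scalar multiples of these. -/
noncomputable def chernCoeff (A : DolbeaultAlgebra Ω) (θ : Matrix (Fin r) (Fin r) Ω) (k l : ℕ) :
    Ω :=
  ((pencil (A.mpdb θ) (θ * θ) ^ k).coeff l).trace

theorem trace_curvaturePath_pow (A : DolbeaultAlgebra Ω) (θ : Matrix (Fin r) (Fin r) Ω) (t : ℂ)
    (k : ℕ) :
    (A.curvaturePath θ t ^ k).trace =
      ∑ l ∈ Finset.range (k + 1), t ^ l • A.chernCoeff θ k l := by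
  simp only [curvaturePath, add_smul_pow_eq_sum_coeff_pencil, Matrix.trace_sum, Matrix.trace_smul,
    chernCoeff]

theorem chernCoeff_zero (A : DolbeaultAlgebra Ω) (θ : Matrix (Fin r) (Fin r) Ω) (k : ℕ) :
    A.chernCoeff θ k 0 = (A.mpdb θ ^ k).trace := by
  rw [chernCoeff, coeff_zero_pencil_pow]

theorem chernCoeff_succ_self (hθ : A.MatDeg 1 0 θ) (m : ℕ) :
    A.chernCoeff θ (m + 1) (m + 1) = 0 := by
  rw [chernCoeff, coeff_self_pencil_pow, trace_mul_self_pow_succ hθ]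

theorem succ_smul_trace_mul_self_mul_curvaturePath_pow (hθ : A.MatDeg 1 0 θ) (t : ℂ) (m : ℕ) :
    ((m : ℂ) + 1) • (θ * θ * A.curvaturePath θ t ^ m).trace =
      ∑ l ∈ Finset.range (m + 1), t ^ l • ((l : ℂ) + 1) • A.chernCoeff θ (m + 1) (l + 1) := by
  have hcoeff (l : ℕ) : ((l : ℂ) + 1) • A.chernCoeff θ (m + 1) (l + 1) =
      ((m : ℂ) + 1) • (θ * θ * (pencil (A.mpdb θ) (θ * θ) ^ m).coeff l).trace := by
    have := coeff_succ_pencil_pow_of_tracialOn (A.even.matrix (n := Fin r)).toSubring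
      (Matrix.traceAddMonoidHom (Fin r) Ω)
      (fun M hM N hN => A.trace_mul_comm_of_mem_even_matrix hM hN)
      (mpdb_mem_even hθ) (mul_self_mem_even hθ) m l
    simpa only [← Nat.cast_smul_eq_nsmul ℂ, Nat.cast_add_one, Matrix.traceAddMonoidHom_apply,
      chernCoeff] using this
  simp only [curvaturePath, add_smul_pow_eq_sum_coeff_pencil, Finset.mul_sum, Matrix.trace_sum,
    mul_smul_comm, Matrix.trace_smul, Finset.smul_sum, hcoeff]
  exact Finset.sum_congr rfl fun l _ => smul_comm _ _ _

/-- `a` lists the coefficients of the powers of `t` in the Chern–Simons polynomial `Tr (θ F_t ^ m)`,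
with `m = k - 1`. Values `a l` with `m < l` are unconstrained. -/
def IsChernSimonsCoeff (A : DolbeaultAlgebra Ω) (θ : Matrix (Fin r) (Fin r) Ω) (m : ℕ)
    (a : ℕ → Ω) : Prop :=
  ∀ t : ℂ, (θ * A.curvaturePath θ t ^ m).trace = ∑ l ∈ Finset.range (m + 1), t ^ l • a l

namespace IsChernSimonsCoeff

variable {m : ℕ} {a : ℕ → Ω}

theorem succ_smul_pd (ha : A.IsChernSimonsCoeff θ m a) (hθ : A.MatDeg 1 0 θ)
    (hθpd : A.mpd θ = -(θ * θ)) {l : ℕ} (hl : l ≤ m) :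
    ((m : ℂ) + 1) • A.pd (a l) = ((l : ℂ) + 1) • A.chernCoeff θ (m + 1) (l + 1) := by
  refine eq_of_forall_sum_pow_smul_eq (K := ℂ)
    (u := fun l => ((m : ℂ) + 1) • A.pd (a l))
    (v := fun l => ((l : ℂ) + 1) • A.chernCoeff θ (m + 1) (l + 1)) (fun t => ?_)
    (Nat.lt_succ_of_le hl)
  rw [← succ_smul_trace_mul_self_mul_curvaturePath_pow hθ,
    ← pd_trace_mul_curvaturePath_pow hθ hθpd, ha t, map_sum, Finset.smul_sum]
  exact Finset.sum_congr rfl fun l _ => by rw [map_smul, smul_comm]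

theorem succ_smul_pdb (ha : A.IsChernSimonsCoeff θ m a) (hθ : A.MatDeg 1 0 θ) {l : ℕ}
    (hl : l ≤ m) :
    ((m : ℂ) + 1) • A.pdb (a l) = ((m : ℂ) + 1 + l) • A.chernCoeff θ (m + 1) l := by
  refine eq_of_forall_sum_pow_smul_eq (K := ℂ)
    (u := fun l => ((m : ℂ) + 1) • A.pdb (a l))
    (v := fun l => ((m : ℂ) + 1 + l) • A.chernCoeff θ (m + 1) l) (fun t => ?_)
    (Nat.lt_succ_of_le hl)
  have htop : ∑ l ∈ Finset.range (m + 2), t ^ l • (l : ℂ) • A.chernCoeff θ (m + 1) l =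
      ∑ l ∈ Finset.range (m + 1), t ^ l • (l : ℂ) • A.chernCoeff θ (m + 1) l := by
    rw [Finset.sum_range_succ, chernCoeff_succ_self hθ, smul_zero, smul_zero, add_zero]
  have hshift :
      t • ∑ l ∈ Finset.range (m + 1), t ^ l • ((l : ℂ) + 1) • A.chernCoeff θ (m + 1) (l + 1) =
        ∑ l ∈ Finset.range (m + 1), t ^ l • (l : ℂ) • A.chernCoeff θ (m + 1) l := by
    rw [← htop, Finset.sum_range_succ' _ (m + 1), Finset.smul_sum]
    simp [smul_smul, pow_succ', mul_assoc]
  calc ∑ l ∈ Finset.range (m + 1), t ^ l • ((m : ℂ) + 1) • A.pdb (a l)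
      = ((m : ℂ) + 1) • A.pdb (θ * A.curvaturePath θ t ^ m).trace := by
        rw [ha t, map_sum, Finset.smul_sum]
        exact Finset.sum_congr rfl fun l _ => by rw [map_smul, smul_comm]
    _ = ((m : ℂ) + 1) • ∑ l ∈ Finset.range (m + 1), t ^ l • A.chernCoeff θ (m + 1) l +
          ∑ l ∈ Finset.range (m + 1), t ^ l • (l : ℂ) • A.chernCoeff θ (m + 1) l := by
        rw [pdb_trace_mul_curvaturePath_pow hθ, smul_add, smul_comm _ t,
          succ_smul_trace_mul_self_mul_curvaturePath_pow hθ, hshift, trace_curvaturePath_pow,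
          Finset.sum_range_succ, chernCoeff_succ_self hθ, smul_zero, add_zero]
    _ = _ := by
        rw [Finset.smul_sum, ← Finset.sum_add_distrib]
        exact Finset.sum_congr rfl fun l _ => by module

theorem eq_trace_pow (ha : A.IsChernSimonsCoeff θ m a) : a m = (θ ^ (2 * m + 1)).trace := by
  have hcoeff : a m = (θ * (pencil (A.mpdb θ) (θ * θ) ^ m).coeff m).trace := by
    refine eq_of_forall_sum_pow_smul_eq (K := ℂ) (u := a)
      (v := fun l => (θ * (pencil (A.mpdb θ) (θ * θ) ^ m).coeff l).trace) (fun t => ?_)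
      (Nat.lt_succ_self m)
    simp only [← ha t, curvaturePath, add_smul_pow_eq_sum_coeff_pencil, Finset.mul_sum,
      Matrix.trace_sum, mul_smul_comm, Matrix.trace_smul]
  rw [hcoeff, coeff_self_pencil_pow, ← pow_two, ← pow_mul, ← pow_succ']

end IsChernSimonsCoeff

/-- The weight `k! l! / (k + l)!` relating `ω_{k+l,k-l-1}` to the coefficient `a_l`. -/
noncomputable def descentWeight (k l : ℕ) : ℂ :=
  (k.factorial * l.factorial) / (k + l).factorial

theorem descentWeight_zero (k : ℕ) : descentWeight k 0 = 1 := by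
  simp [descentWeight, Nat.factorial_ne_zero]

theorem descentWeight_succ_left (k l : ℕ) :
    descentWeight (k + 1) l * (k + 1 + l) = (k + 1) * descentWeight k l := by
  have h : (k : ℂ) + l + 1 ≠ 0 := by exact_mod_cast Nat.succ_ne_zero (k + l)
  have h' : ((k + l).factorial : ℂ) ≠ 0 := by exact_mod_cast Nat.factorial_ne_zero _
  rw [descentWeight, descentWeight, Nat.add_right_comm, Nat.factorial_succ, Nat.factorial_succ]
  push_cast
  field_simp
  ring

theorem descentWeight_succ_comm (k l : ℕ) :
    descentWeight (k + 1) l * (l + 1) = (k + 1) * descentWeight k (l + 1) := by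
  simp only [descentWeight, Nat.add_right_comm k 1 l, ← add_assoc, Nat.factorial_succ]
  push_cast
  ring

/-- The sequence `(m! l! / (m + l)!) • [t ^ l] Tr (F_t ^ (m + 1))` through which the descent runs:
for `k = m + 1` its term of index `l` is both `∂̄ω_{k+l,k-l-1}` and `∂ω_{k+l-1,k-l}`. -/
noncomputable def descentTerm (A : DolbeaultAlgebra Ω) (θ : Matrix (Fin r) (Fin r) Ω) (m l : ℕ) :
    Ω :=
  descentWeight m l • A.chernCoeff θ (m + 1) l

theorem descentTerm_zero (A : DolbeaultAlgebra Ω) (θ : Matrix (Fin r) (Fin r) Ω) (m : ℕ) :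
    A.descentTerm θ m 0 = (A.mpdb θ ^ (m + 1)).trace := by
  rw [descentTerm, descentWeight_zero, one_smul, chernCoeff_zero]

theorem descentTerm_succ_self (hθ : A.MatDeg 1 0 θ) (m : ℕ) :
    A.descentTerm θ m (m + 1) = 0 := by
  rw [descentTerm, chernCoeff_succ_self hθ, smul_zero]

namespace IsChernSimonsCoeff

variable {m : ℕ} {a : ℕ → Ω}

theorem pd_smul (ha : A.IsChernSimonsCoeff θ m a) (hθ : A.MatDeg 1 0 θ)
    (hθpd : A.mpd θ = -(θ * θ)) {l : ℕ} (hl : l ≤ m) :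
    A.pd (descentWeight (m + 1) l • a l) = A.descentTerm θ m (l + 1) := by
  have hm : (m : ℂ) + 1 ≠ 0 := by exact_mod_cast Nat.succ_ne_zero m
  refine smul_right_injective Ω hm ?_
  simp only [map_smul, descentTerm]
  rw [smul_comm, ha.succ_smul_pd hθ hθpd hl, smul_smul, smul_smul, descentWeight_succ_comm]

theorem pdb_smul (ha : A.IsChernSimonsCoeff θ m a) (hθ : A.MatDeg 1 0 θ) {l : ℕ} (hl : l ≤ m) :
    A.pdb (descentWeight (m + 1) l • a l) = A.descentTerm θ m l := by
  have hm : (m : ℂ) + 1 ≠ 0 := by exact_mod_cast Nat.succ_ne_zero m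
  refine smul_right_injective Ω hm ?_
  simp only [map_smul, descentTerm]
  rw [smul_comm, ha.succ_smul_pdb hθ hl, smul_smul, smul_smul, descentWeight_succ_left]

end IsChernSimonsCoeff

theorem pd_add_pdb_alternating_sum (A : DolbeaultAlgebra Ω) {k : ℕ} {ω u : ℕ → Ω}
    (hpd : ∀ l < k, A.pd (ω l) = u (l + 1)) (hpdb : ∀ l < k, A.pdb (ω l) = u l) :
    A.pd (∑ l ∈ Finset.range k, (-1 : ℂ) ^ l • ω l) +
      A.pdb (∑ l ∈ Finset.range k, (-1 : ℂ) ^ l • ω l) = u 0 - (-1 : ℂ) ^ k • u k := by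
  have htele := Finset.sum_range_sub' (fun l => (-1 : ℂ) ^ l • u l) k
  simp only [pow_zero, one_smul] at htele
  rw [← htele, map_sum, map_sum, ← Finset.sum_add_distrib]
  refine Finset.sum_congr rfl fun l hl => ?_
  rw [map_smul, map_smul, hpd l (Finset.mem_range.1 hl), hpdb l (Finset.mem_range.1 hl), pow_succ]
  module

end ChernSimons

end DolbeaultAlgebra

/-- (Proposition: degree decomposition of the Chern–Simons form) Fix `k ≥ 1`, let `a l`
be the coefficients of `Tr(θ(Θ + tθ²)^(k-1)) = ∑ a_l tˡ` and set
`ω_(k+l,k-l-1) = (k! l! / (k+l)!) a_l`. Then the descent equations hold: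
`∂̄ω_(k,k-1) = Tr(Θᵏ)`, `∂ω_(k+l,k-l-1) = ∂̄ω_(k+l+1,k-l-2)` for `0 ≤ l ≤ k-2`, and
`∂ω_(2k-1,0) = 0`; moreover `ω_(2k-1,0) = (k!(k-1)!/(2k-1)!) Tr(θ^(2k-1))`; consequently
`Tr(Θᵏ) = (∂ + ∂̄)(∑_{l=0}^{k-1} (-1)ˡ ω_(k+l,k-l-1))`. -/
theorem stmt6
    (A : DolbeaultAlgebra Ω) (r : ℕ) (hr : 1 ≤ r)
    (θ Θ : Matrix (Fin r) (Fin r) Ω)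
    (hθdeg : A.MatDeg 1 0 θ) (hθpd : A.mpd θ = -(θ * θ)) (hΘ : Θ = A.mpdb θ)
    (k : ℕ) (hk : 1 ≤ k) (a : ℕ → Ω)
    (ha : ∀ t : ℂ, Matrix.trace (θ * (Θ + t • (θ * θ)) ^ (k - 1)) =
      ∑ l ∈ Finset.range k, t ^ l • a l)
    (ω : ℕ → Ω)
    (hω : ∀ l : ℕ, ω l =
      (((k.factorial : ℂ) * (l.factorial : ℂ)) / ((k + l).factorial : ℂ)) • a l) :
    A.pdb (ω 0) = Matrix.trace (Θ ^ k) ∧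
    (∀ l : ℕ, l + 2 ≤ k → A.pd (ω l) = A.pdb (ω (l + 1))) ∧
    A.pd (ω (k - 1)) = 0 ∧
    ω (k - 1) = (((k.factorial : ℂ) * ((k - 1).factorial : ℂ)) / ((2 * k - 1).factorial : ℂ)) •
      Matrix.trace (θ ^ (2 * k - 1)) ∧
    Matrix.trace (Θ ^ k) =
      A.pd (∑ l ∈ Finset.range k, ((-1 : ℂ) ^ l) • ω l) +
      A.pdb (∑ l ∈ Finset.range k, ((-1 : ℂ) ^ l) • ω l) := by
  subst hΘ
  obtain ⟨m, rfl⟩ := Nat.exists_eq_add_of_le' hk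
  have hcs : A.IsChernSimonsCoeff θ m a := ha
  have hpd (l : ℕ) (hl : l < m + 1) : A.pd (ω l) = A.descentTerm θ m (l + 1) := by
    rw [hω]
    exact hcs.pd_smul hθdeg hθpd (Nat.le_of_lt_succ hl)
  have hpdb (l : ℕ) (hl : l < m + 1) : A.pdb (ω l) = A.descentTerm θ m l := by
    rw [hω]
    exact hcs.pdb_smul hθdeg (Nat.le_of_lt_succ hl)
  have htop : A.descentTerm θ m (m + 1) = 0 := DolbeaultAlgebra.descentTerm_succ_self hθdeg m
  refine ⟨?_, fun l hl => ?_, ?_, ?_, ?_⟩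
  · rw [hpdb 0 m.succ_pos, A.descentTerm_zero]
  · rw [hpd l (by omega), hpdb (l + 1) (by omega)]
  · rw [Nat.add_sub_cancel, hpd m m.lt_succ_self, htop]
  · rw [Nat.add_sub_cancel, hω, hcs.eq_trace_pow, show 2 * (m + 1) - 1 = 2 * m + 1 by omega,
      show m + 1 + m = 2 * m + 1 by omega]
  · rw [A.pd_add_pdb_alternating_sum hpd hpdb, htop, smul_zero, sub_zero, A.descentTerm_zero]
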